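/- Let α_x ≥ 0, α_p > 0, σ_μ ≥ 0 with α_x + α_p²·σ_μ² > 0, set α = α_x + α_p and α_ψ = α²/(α_x + α_p²·σ_μ²). If √(α_x/α_p² + σ_μ²) < 1/√(2π), then there exist x_c ∈ ℝ and m ∈ ℝ such that the equation Φ(√α_ψ·(−x_c/√α + (α_p/α)·θ − (α_p/α)·m)) = θ has at least three distinct solutions θ in (0,1). -/

import Mathlib

/-- The standard normal cumulative distribution function. -/
noncomputable def stdNormalCDF (x : ℝ) : ℝ :=
  ∫ t in Set.Iic x, (Real.sqrt (2 * Real.pi))⁻¹ * Real.exp (-t ^ 2 / 2)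

open MeasureTheory Set Filter Topology

lemma aux_pdf : (fun t : ℝ => (Real.sqrt (2 * Real.pi))⁻¹ * Real.exp (-t ^ 2 / 2))
    = ProbabilityTheory.gaussianPDFReal 0 1 := by
  funext t
  simp [ProbabilityTheory.gaussianPDFReal]

lemma aux_int : Integrable (fun t : ℝ => (Real.sqrt (2 * Real.pi))⁻¹ * Real.exp (-t ^ 2 / 2)) := by
  rw [aux_pdf]; exact ProbabilityTheory.integrable_gaussianPDFReal 0 1

lemma aux_one : ∫ t : ℝ, (Real.sqrt (2 * Real.pi))⁻¹ * Real.exp (-t ^ 2 / 2) = 1 := by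
  rw [aux_pdf]; exact ProbabilityTheory.integral_gaussianPDFReal_eq_one 0 one_ne_zero

lemma aux_neg (x : ℝ) : stdNormalCDF (-x) = 1 - stdNormalCDF x := by
  have h1 := integral_comp_neg_Iic (-x)
    (fun t : ℝ => (Real.sqrt (2 * Real.pi))⁻¹ * Real.exp (-t ^ 2 / 2))
  simp only [neg_sq, neg_neg] at h1
  have h2 := intervalIntegral.integral_Iic_add_Ioi
    (b := x) aux_int.integrableOn aux_int.integrableOn
  rw [aux_one] at h2
  unfold stdNormalCDF
  linarith

lemma aux_pos (x : ℝ) : 0 < stdNormalCDF x := by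
  unfold stdNormalCDF
  rw [setIntegral_pos_iff_support_of_nonneg_ae _ aux_int.integrableOn]
  · have : Function.support (fun t : ℝ => (Real.sqrt (2 * Real.pi))⁻¹ * Real.exp (-t ^ 2 / 2))
        = univ := by
      ext t
      have : 0 < (Real.sqrt (2 * Real.pi))⁻¹ * Real.exp (-t ^ 2 / 2) := by positivity
      simpa only [Function.mem_support, mem_univ, iff_true] using this.ne'
    rw [this]; simp
  · exact Eventually.of_forall fun t => by simp only [Pi.zero_apply]; positivity

lemma aux_deriv (x : ℝ) : HasDerivAt stdNormalCDF
    ((Real.sqrt (2 * Real.pi))⁻¹ * Real.exp (-x ^ 2 / 2)) x := by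
  have hc : Continuous (fun t : ℝ => (Real.sqrt (2 * Real.pi))⁻¹ * Real.exp (-t ^ 2 / 2)) := by
    fun_prop
  have h0 : stdNormalCDF = fun y => stdNormalCDF 0 +
      ∫ t in (0:ℝ)..y, (Real.sqrt (2 * Real.pi))⁻¹ * Real.exp (-t ^ 2 / 2) := by
    funext y
    have := intervalIntegral.integral_Iic_sub_Iic (a := 0) (b := y)
      aux_int.integrableOn aux_int.integrableOn
    unfold stdNormalCDF
    linarith
  rw [h0]
  exact (intervalIntegral.integral_hasDerivAt_right (hc.intervalIntegrable _ _)
    (hc.stronglyMeasurableAtFilter _ _) hc.continuousAt).const_add _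

lemma aux_root (k : ℝ) (hk : Real.sqrt (2 * Real.pi) < k) :
    ∃ θ : ℝ, 1 / 2 < θ ∧ θ < 1 ∧ stdNormalCDF (k * (θ - 1 / 2)) = θ := by
  have hhalf : stdNormalCDF 0 = 1 / 2 := by
    have := aux_neg 0
    rw [neg_zero] at this; linarith
  have hs : 0 < Real.sqrt (2 * Real.pi) := by positivity
  set g : ℝ → ℝ := fun θ => stdNormalCDF (k * (θ - 1 / 2)) - θ with hg
  have hd : ∀ x, HasDerivAt g ((Real.sqrt (2 * Real.pi))⁻¹ *
      Real.exp (-(k * (x - 1 / 2)) ^ 2 / 2) * k - 1) x := by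
    intro x
    have h1 : HasDerivAt (fun θ : ℝ => k * (θ - 1 / 2)) k x := by
      have h := ((hasDerivAt_id x).sub_const (1 / 2 : ℝ)).const_mul k
      rw [mul_one] at h; exact h
    exact ((aux_deriv _).comp x h1).sub (hasDerivAt_id x)
  have hg0 : g (1 / 2) = 0 := by simp [hg, hhalf]
  have hcont : Continuous g := continuous_iff_continuousAt.2 fun x => (hd x).continuousAt
  have hg1 : g 1 < 0 := by
    have h1 := aux_neg (k * (1 - 1 / 2))
    have h2 := aux_pos (-(k * (1 - 1 / 2)))
    simp only [hg]; linarith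
  have hpos : 0 < (Real.sqrt (2 * Real.pi))⁻¹ *
      Real.exp (-(k * ((1 / 2 : ℝ) - 1 / 2)) ^ 2 / 2) * k - 1 := by
    have : 1 < (Real.sqrt (2 * Real.pi))⁻¹ * k := by
      rw [inv_mul_eq_div, one_lt_div hs]; exact hk
    simpa using this
  have hsl := (hasDerivAt_iff_tendsto_slope.1 (hd (1 / 2))).eventually (lt_mem_nhds hpos)
  have hsl2 : ∀ᶠ y in 𝓝[>] (1 / 2 : ℝ), 0 < slope g (1 / 2) y :=
    hsl.filter_mono (nhdsWithin_mono _ fun y hy => ne_of_gt hy)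
  have hI : ∀ᶠ y in 𝓝[>] (1 / 2 : ℝ), y ∈ Ioo (1 / 2 : ℝ) 1 :=
    Ioo_mem_nhdsGT (by norm_num)
  obtain ⟨y, hy, hy1, hy2⟩ := (hsl2.and hI).exists
  have hgy : 0 < g y := by
    rw [slope_def_field, hg0, sub_zero] at hy
    have := mul_pos hy (sub_pos.2 hy1)
    rwa [div_mul_cancel₀ _ (sub_pos.2 hy1).ne'] at this
  obtain ⟨θ, ⟨h1, h2⟩, h3⟩ := intermediate_value_Ioo' hy2.le hcont.continuousOn ⟨hg1, hgy⟩
  exact ⟨θ, hy1.trans h1, h2, by simp only [hg] at h3; linarith⟩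

theorem stmt_3 (αx αp σμ : ℝ) (hαx : 0 ≤ αx) (hαp : 0 < αp) (hσμ : 0 ≤ σμ)
    (hpos : 0 < αx + αp ^ 2 * σμ ^ 2)
    (α αψ : ℝ) (hα : α = αx + αp) (hαψ : αψ = α ^ 2 / (αx + αp ^ 2 * σμ ^ 2))
    (h : Real.sqrt (αx / αp ^ 2 + σμ ^ 2) < 1 / Real.sqrt (2 * Real.pi)) :
    ∃ xc m : ℝ, ∃ θ₁ θ₂ θ₃ : ℝ,
      θ₁ ∈ Set.Ioo (0 : ℝ) 1 ∧ θ₂ ∈ Set.Ioo (0 : ℝ) 1 ∧ θ₃ ∈ Set.Ioo (0 : ℝ) 1 ∧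
      θ₁ ≠ θ₂ ∧ θ₁ ≠ θ₃ ∧ θ₂ ≠ θ₃ ∧
      stdNormalCDF (Real.sqrt αψ *
        (-xc / Real.sqrt α + (αp / α) * θ₁ - (αp / α) * m)) = θ₁ ∧
      stdNormalCDF (Real.sqrt αψ *
        (-xc / Real.sqrt α + (αp / α) * θ₂ - (αp / α) * m)) = θ₂ ∧
      stdNormalCDF (Real.sqrt αψ *
        (-xc / Real.sqrt α + (αp / α) * θ₃ - (αp / α) * m)) = θ₃ := by
  have hα0 : 0 < α := by rw [hα]; linarith
  set D := αx + αp ^ 2 * σμ ^ 2 with hD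
  set k := Real.sqrt αψ * (αp / α) with hkdef
  have hψ : Real.sqrt αψ = α / Real.sqrt D := by
    rw [hαψ, Real.sqrt_div (sq_nonneg _), Real.sqrt_sq hα0.le]
  have hsD : 0 < Real.sqrt D := Real.sqrt_pos.2 hpos
  have hk : k = αp / Real.sqrt D := by
    rw [hkdef, hψ]; field_simp
  have hq : Real.sqrt (αx / αp ^ 2 + σμ ^ 2) = Real.sqrt D / αp := by
    have : αx / αp ^ 2 + σμ ^ 2 = D / αp ^ 2 := by rw [hD]; field_simp
    rw [this, Real.sqrt_div hpos.le, Real.sqrt_sq hαp.le]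
  have hs : 0 < Real.sqrt (2 * Real.pi) := by positivity
  have hkk : Real.sqrt (2 * Real.pi) < k := by
    rw [hq, div_lt_div_iff₀ hαp hs] at h
    rw [hk, lt_div_iff₀ hsD]; linarith
  obtain ⟨θ, h1, h2, h3⟩ := aux_root k hkk
  have key : ∀ t : ℝ, Real.sqrt αψ * (-0 / Real.sqrt α + (αp / α) * t - (αp / α) * (1 / 2))
      = k * (t - 1 / 2) := by
    intro t; rw [hkdef]; ring
  refine ⟨0, 1 / 2, θ, 1 / 2, 1 - θ, ⟨by linarith, h2⟩, ⟨by norm_num, by norm_num⟩,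
    ⟨by linarith, by linarith⟩, h1.ne', by intro h; linarith, by intro h; linarith, ?_, ?_, ?_⟩
  · rw [key, h3]
  · rw [key]
    have := aux_neg 0
    rw [neg_zero] at this
    rw [sub_self, mul_zero]; linarith
  · rw [key, show k * (1 - θ - 1 / 2) = -(k * (θ - 1 / 2)) by ring, aux_neg, h3]
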